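/- Let 0 < α < 1. For every λ > 0 and T > 0, E_{α,1}(-λ T^α) > 0; in particular E_{α,1}(-λ T^α) ≠ 0. -/

import Mathlib

open Real

/-- The one-parameter Mittag-Leffler function `E_{α,1}` on the reals. -/
noncomputable def mittagLeffler (α : ℝ) (x : ℝ) : ℝ :=
  ∑' k : ℕ, x ^ k / Real.Gamma (α * k + 1)

open Set MeasureTheory Filter Topology

lemma ml_gamma_lower {M x : ℝ} (hM : 0 < M) (hx : 0 ≤ x) :
    M ^ x * Real.exp (-M) ≤ Real.Gamma (x + 1) := by
  rw [Real.Gamma_eq_integral (by linarith), ← integral_exp_neg_Ioi, ← integral_const_mul]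
  have hint := Real.GammaIntegral_convergent (s := x + 1) (by linarith)
  calc ∫ t in Ioi M, M ^ x * Real.exp (-t)
      ≤ ∫ t in Ioi M, Real.exp (-t) * t ^ (x + 1 - 1) := by
        apply setIntegral_mono_on
        · exact (integrableOn_exp_neg_Ioi M).const_mul _
        · exact hint.mono_set (Ioi_subset_Ioi hM.le)
        · exact measurableSet_Ioi
        · intro t ht
          rw [mul_comm, add_sub_cancel_right]
          have : M ^ x ≤ t ^ x := Real.rpow_le_rpow hM.le (le_of_lt ht) hx
          gcongr
    _ ≤ _ := by
        apply setIntegral_mono_set hint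
        · filter_upwards [ae_restrict_mem measurableSet_Ioi] with t ht
          have : (0:ℝ) < t := ht
          simp only [Pi.zero_apply]
          positivity
        · exact (Ioi_subset_Ioi hM.le).eventuallyLE

lemma ml_gamma_pos {α : ℝ} (hα : 0 < α) (k : ℕ) : 0 < Real.Gamma (α * k + 1) :=
  Real.Gamma_pos_of_pos (by positivity)

lemma ml_summable {α R : ℝ} (hα : 0 < α) (hR : 0 < R) :
    Summable fun k : ℕ => ((k : ℝ) + 1) * R ^ k / Real.Gamma (α * k + 1) := by
  set M : ℝ := (2 * R) ^ (1 / α) with hMdef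
  have hM : 0 < M := by positivity
  have hMα : M ^ α = 2 * R := by
    rw [hMdef, ← Real.rpow_mul (by positivity), one_div_mul_cancel hα.ne', Real.rpow_one]
  have hs : Summable fun k : ℕ => Real.exp M * (((k : ℝ) + 1) * (1 / 2) ^ k) := by
    apply Summable.mul_left
    have h1 : Summable fun k : ℕ => (k : ℝ) ^ 1 * (1 / 2 : ℝ) ^ k :=
      summable_pow_mul_geometric_of_norm_lt_one 1 (by norm_num)
    have h2 : Summable fun k : ℕ => (1 / 2 : ℝ) ^ k := summable_geometric_two
    refine (h1.add h2).congr fun k => ?_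
    ring
  refine Summable.of_nonneg_of_le (fun k => ?_) (fun k => ?_) hs
  · have := ml_gamma_pos hα k
    positivity
  · have h := ml_gamma_lower hM (x := α * k) (by positivity)
    rw [Real.rpow_mul hM.le, hMα, Real.rpow_natCast] at h
    rw [div_le_iff₀ (ml_gamma_pos hα k)]
    calc ((k : ℝ) + 1) * R ^ k
        = Real.exp M * (((k : ℝ) + 1) * (1 / 2) ^ k) * ((2 * R) ^ k * Real.exp (-M)) := by
          rw [Real.exp_neg, mul_pow]
          have := Real.exp_pos M
          field_simp
          rw [← mul_pow]; norm_num
      _ ≤ _ := by gcongr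

/-- the derivative series -/
noncomputable def mlD (α x : ℝ) : ℝ :=
  ∑' k : ℕ, ((k : ℝ) + 1) * x ^ k / Real.Gamma (α * (k + 1 : ℕ) + 1)

lemma ml_summable' {α R : ℝ} (hα : 0 < α) (hR : 0 < R) :
    Summable fun k : ℕ => ((k : ℝ) + 1) * R ^ k / Real.Gamma (α * (k + 1 : ℕ) + 1) := by
  have h := ((summable_nat_add_iff 1).2 (ml_summable hα hR)).mul_left (1 / R)
  refine Summable.of_nonneg_of_le (fun k => ?_) (fun k => ?_) h
  · have := ml_gamma_pos hα (k + 1)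
    positivity
  · have := ml_gamma_pos hα (k + 1)
    rw [← mul_div_assoc]
    refine div_le_div_of_nonneg_right ?_ this.le
    rw [pow_succ]
    have e : 1 / R * (((k + 1 : ℕ) : ℝ) + 1) * (R ^ k * R) = ((k : ℝ) + 2) * R ^ k := by
      push_cast; field_simp; ring
    rw [← mul_assoc, e]
    gcongr; norm_num

lemma ml_summable0 {α : ℝ} (hα : 0 < α) (x : ℝ) :
    Summable fun k : ℕ => x ^ k / Real.Gamma (α * k + 1) := by
  refine Summable.of_norm_bounded (ml_summable hα (R := |x| + 1) (by positivity)) fun k => ?_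
  have := ml_gamma_pos hα k
  rw [norm_div, norm_pow, Real.norm_eq_abs, Real.norm_of_nonneg this.le]
  gcongr
  have : |x| ^ k ≤ (|x| + 1) ^ k := by gcongr; linarith
  have h2 : 0 ≤ (|x| + 1) ^ k := by positivity
  have h3 : (0:ℝ) ≤ k := by positivity
  nlinarith

lemma ml_hasDerivAt {α : ℝ} (hα : 0 < α) (x : ℝ) :
    HasDerivAt (mittagLeffler α) (mlD α x) x := by
  have hR : (0:ℝ) < |x| + 1 := by positivity
  have hb := ml_summable' hα hR
  have key := hasDerivAt_tsum_of_isPreconnected (𝕜 := ℝ) (t := Metric.ball (0:ℝ) (|x| + 1))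
    (g := fun k z => z ^ (k + 1) / Real.Gamma (α * (k + 1 : ℕ) + 1))
    (g' := fun k z => ((k : ℝ) + 1) * z ^ k / Real.Gamma (α * (k + 1 : ℕ) + 1))
    (y₀ := x) (y := x) hb Metric.isOpen_ball
    (convex_ball _ _).isPreconnected
    (fun k y _ => by
      have := (hasDerivAt_pow (k + 1) y).div_const (Real.Gamma (α * (k + 1 : ℕ) + 1))
      simpa using this)
    (fun k y hy => by
      have := ml_gamma_pos hα (k + 1)
      rw [mem_ball_zero_iff, Real.norm_eq_abs] at hy
      rw [norm_div, norm_mul, norm_pow, Real.norm_eq_abs y, Real.norm_of_nonneg this.le,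
        Real.norm_of_nonneg (by positivity : (0:ℝ) ≤ (k : ℝ) + 1)]
      gcongr)
    (by simp) ((summable_nat_add_iff 1).2 (ml_summable0 hα x)) (by simp)
  have h2 : mittagLeffler α = fun z => 1 +
      ∑' k : ℕ, z ^ (k + 1) / Real.Gamma (α * (k + 1 : ℕ) + 1) := by
    ext z
    rw [mittagLeffler, (ml_summable0 hα z).tsum_eq_zero_add]
    simp
  rw [h2]
  exact key.const_add 1

lemma mlD_continuous {α : ℝ} (hα : 0 < α) : Continuous (mlD α) := by
  rw [continuous_iff_continuousAt]
  intro x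
  have hb := ml_summable' hα (R := |x| + 1) (by positivity)
  have : ContinuousOn (mlD α) (Metric.ball (0:ℝ) (|x| + 1)) := by
    apply continuousOn_tsum _ hb
    · intro k y hy
      have := ml_gamma_pos hα (k + 1)
      rw [mem_ball_zero_iff, Real.norm_eq_abs] at hy
      rw [norm_div, norm_mul, norm_pow, Real.norm_eq_abs y, Real.norm_of_nonneg this.le,
        Real.norm_of_nonneg (by positivity : (0:ℝ) ≤ (k : ℝ) + 1)]
      gcongr
    · intro k
      fun_prop
  exact this.continuousAt (Metric.isOpen_ball.mem_nhds (by simp))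

lemma ml_beta_aux {a b s : ℝ} (hs : s ∈ Ioc (0:ℝ) 1) :
    (s : ℂ) ^ ((a : ℂ) - 1) * (1 - (s : ℂ)) ^ ((b : ℂ) - 1)
      = ((s ^ (a - 1) * (1 - s) ^ (b - 1) : ℝ) : ℂ) := by
  rw [Complex.ofReal_mul, Complex.ofReal_cpow hs.1.le, Complex.ofReal_cpow (by linarith [hs.2])]
  push_cast
  rfl

lemma ml_beta_int {a b : ℝ} (ha : 0 < a) (hb : 0 < b) :
    IntegrableOn (fun s : ℝ => s ^ (a - 1) * (1 - s) ^ (b - 1)) (Ioc 0 1) := by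
  have h := (Complex.betaIntegral_convergent (u := a) (v := b) (by simpa) (by simpa))
  rw [intervalIntegrable_iff_integrableOn_Ioc_of_le zero_le_one] at h
  have h2 := (h.congr_fun (fun s hs => ml_beta_aux hs) measurableSet_Ioc).re
  exact h2

lemma ml_beta_eq {a b : ℝ} (ha : 0 < a) (hb : 0 < b) :
    ∫ s in Ioc (0:ℝ) 1, s ^ (a - 1) * (1 - s) ^ (b - 1)
      = Real.Gamma a * Real.Gamma b / Real.Gamma (a + b) := by
  have h := Complex.betaIntegral_eq_Gamma_mul_div a b (by simpa) (by simpa)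
  rw [Complex.betaIntegral, intervalIntegral.integral_of_le zero_le_one,
    setIntegral_congr_fun measurableSet_Ioc (fun s hs => ml_beta_aux hs),
    integral_complex_ofReal, ← Complex.ofReal_add, Complex.Gamma_ofReal, Complex.Gamma_ofReal,
    Complex.Gamma_ofReal] at h
  exact_mod_cast h

lemma ml_term {α c s : ℝ} (hα : 0 < α) (hs : 0 < s) (k : ℕ) :
    (s ^ (α - 1) * (1 - s) ^ ((1 - α) - 1)) * (-(c * α) *
      (((k : ℝ) + 1) * (-(c * s ^ α)) ^ k / Real.Gamma (α * (k + 1 : ℕ) + 1)))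
    = ((-c) ^ (k + 1) / Real.Gamma (α * (k + 1 : ℕ))) *
      (s ^ (α * (k + 1 : ℕ) - 1) * (1 - s) ^ ((1 - α) - 1)) := by
  have hk : (0:ℝ) < α * (k + 1 : ℕ) := by positivity
  have hG := Real.Gamma_pos_of_pos hk
  rw [Real.Gamma_add_one hk.ne']
  have e : s ^ (α * (k + 1 : ℕ) - 1) = s ^ (α - 1) * (s ^ α) ^ k := by
    rw [← Real.rpow_natCast (s ^ α) k, ← Real.rpow_mul hs.le, ← Real.rpow_add hs]
    congr 1; push_cast; ring
  have e2 : (-(c * s ^ α)) ^ k = (-c) ^ k * (s ^ α) ^ k := by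
    rw [← mul_pow]; ring
  rw [e, e2, pow_succ]
  have : (0:ℝ) < (k:ℝ) + 1 := by positivity
  push_cast at hG ⊢
  field_simp

lemma ml_integral_eq {α : ℝ} (hα0 : 0 < α) (hα1 : α < 1) (c : ℝ) :
    ∫ s in Ioc (0:ℝ) 1, (s ^ (α - 1) * (1 - s) ^ ((1 - α) - 1)) *
      (-(c * α) * mlD α (-(c * s ^ α)))
    = -c * Real.Gamma (1 - α) * mittagLeffler α (-c) := by
  have hb : 0 < 1 - α := by linarith
  have hGb := Real.Gamma_pos_of_pos hb
  have hk : ∀ k : ℕ, (0:ℝ) < α * (k + 1 : ℕ) := fun k => by positivity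
  have hG : ∀ k : ℕ, 0 < Real.Gamma (α * (k + 1 : ℕ)) := fun k => Real.Gamma_pos_of_pos (hk k)
  have harg : ∀ k : ℕ, α * (k + 1 : ℕ) + (1 - α) = α * k + 1 := fun k => by push_cast; ring
  set F : ℕ → ℝ → ℝ := fun k s => ((-c) ^ (k + 1) / Real.Gamma (α * (k + 1 : ℕ))) *
      (s ^ (α * (k + 1 : ℕ) - 1) * (1 - s) ^ ((1 - α) - 1)) with hF
  have h1 : ∀ k, Integrable (F k) (volume.restrict (Ioc 0 1)) := fun k =>
    (ml_beta_int (hk k) hb).const_mul _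
  have h2 : Summable fun k => ∫ s in Ioc (0:ℝ) 1, ‖F k s‖ := by
    have hsum := (ml_summable0 hα0 |c|).mul_left (|c| * Real.Gamma (1 - α))
    refine hsum.congr fun k => ?_
    have : ∫ s in Ioc (0:ℝ) 1, ‖F k s‖ = ∫ s in Ioc (0:ℝ) 1,
        (|c| ^ (k + 1) / Real.Gamma (α * (k + 1 : ℕ))) *
      (s ^ (α * (k + 1 : ℕ) - 1) * (1 - s) ^ ((1 - α) - 1)) := by
      refine setIntegral_congr_fun measurableSet_Ioc fun s hs => ?_
      have a1 : 0 ≤ s ^ (α * (k + 1 : ℕ) - 1) := Real.rpow_nonneg hs.1.le _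
      have a2 : 0 ≤ (1 - s) ^ ((1 - α) - 1) := Real.rpow_nonneg (by linarith [hs.2]) _
      simp only [hF]
      rw [norm_mul, norm_div, norm_pow, norm_neg, Real.norm_eq_abs c,
        Real.norm_of_nonneg (hG k).le, Real.norm_of_nonneg (mul_nonneg a1 a2)]
    rw [this, integral_const_mul, ml_beta_eq (hk k) hb, harg]
    have := hG k
    have := ml_gamma_pos hα0 k
    field_simp
    ring
  have h3 := hasSum_integral_of_summable_integral_norm h1 h2
  have h4 : ∫ s in Ioc (0:ℝ) 1, (s ^ (α - 1) * (1 - s) ^ ((1 - α) - 1)) *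
      (-(c * α) * mlD α (-(c * s ^ α))) = ∫ s in Ioc (0:ℝ) 1, ∑' k, F k s := by
    refine setIntegral_congr_fun measurableSet_Ioc fun s hs => ?_
    simp only [hF, mlD]
    rw [← tsum_mul_left, ← tsum_mul_left]
    exact tsum_congr fun k => ml_term hα0 hs.1 k
  rw [h4, ← h3.tsum_eq, mittagLeffler, ← tsum_mul_left]
  refine tsum_congr fun k => ?_
  simp only [hF]
  rw [integral_const_mul, ml_beta_eq (hk k) hb, harg]
  have := hG k
  have := ml_gamma_pos hα0 k
  field_simp
  ring

lemma ml_first_zero {α : ℝ} (hα0 : 0 < α) (hα1 : α < 1) {c : ℝ} (hc : 0 < c)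
    (hz : mittagLeffler α (-c) = 0)
    (hpos : ∀ y, 0 ≤ y → y < c → 0 < mittagLeffler α (-y)) : False := by
  have hb : 0 < 1 - α := by linarith
  have hI := ml_integral_eq hα0 hα1 c
  rw [hz, mul_zero, ← intervalIntegral.integral_of_le zero_le_one] at hI
  set u : ℝ → ℝ := fun s => mittagLeffler α (-(c * s ^ α)) with hu
  have hEc : Continuous (mittagLeffler α) :=
    continuous_iff_continuousAt.2 fun x => (ml_hasDerivAt hα0 x).continuousAt
  have hpow : Continuous fun s : ℝ => s ^ α := Real.continuous_rpow_const hα0.le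
  have huc : Continuous u := hEc.comp (by fun_prop)
  have hu1 : u 1 = 0 := by simp [hu, hz]
  have hu0 : u 0 = 1 := by
    simp only [hu, Real.zero_rpow hα0.ne', mul_zero, neg_zero, mittagLeffler]
    rw [tsum_eq_single 0]
    · simp
    · intro k hk; simp [hk]
  have hud : ∀ s : ℝ, 0 < s →
      HasDerivAt u (mlD α (-(c * s ^ α)) * (-(c * (α * s ^ (α - 1))))) s := by
    intro s hs
    have h := (((Real.hasDerivAt_rpow_const (p := α) (Or.inl hs.ne')).const_mul c).neg)
    exact (ml_hasDerivAt hα0 _).comp s h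
  have hupos : ∀ s ∈ Ioo (0:ℝ) 1, 0 < u s := by
    intro s hs
    have h0 : 0 ≤ s ^ α := Real.rpow_nonneg hs.1.le _
    have h1 : s ^ α < 1 := Real.rpow_lt_one hs.1.le hs.2 hα0
    apply hpos
    · positivity
    · nlinarith
  set g : ℝ → ℝ := fun s => (1 - s) ^ ((1 - α) - 1) * u s with hg
  have hgc : ContinuousOn g (Icc 0 1) := by
    have hd : Continuous (dslope u 1) := by
      rw [← continuousOn_univ, continuousOn_dslope univ_mem]
      exact ⟨huc.continuousOn, (hud 1 one_pos).differentiableAt⟩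
    have h2 : Continuous fun s : ℝ => -((1 - s) ^ (1 - α) * dslope u 1 s) := by
      have : Continuous fun s : ℝ => (1 - s) ^ (1 - α) :=
        (Real.continuous_rpow_const hb.le).comp (by fun_prop)
      fun_prop
    refine h2.continuousOn.congr fun s hs => ?_
    rcases hs.2.eq_or_lt with h | h
    · subst h
      simp [hg, hu1, Real.zero_rpow hb.ne']
    · have h1s : 0 < 1 - s := by linarith
      have hne : s - 1 ≠ 0 := by linarith
      simp only [hg]
      rw [dslope_of_ne _ h.ne, slope_def_field, hu1, Real.rpow_sub_one h1s.ne']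
      field_simp
      ring
  have hle := intervalIntegral.integral_le_sub_of_hasDeriv_right_of_le (a := 0) (b := 1)
    (g := g)
    (g' := fun s => (-1 * ((1 - α) - 1) * (1 - s) ^ ((1 - α) - 1 - 1)) * u s +
      (1 - s) ^ ((1 - α) - 1) * (mlD α (-(c * s ^ α)) * (-(c * (α * s ^ (α - 1))))))
    (φ := fun s => (s ^ (α - 1) * (1 - s) ^ ((1 - α) - 1)) *
      (-(c * α) * mlD α (-(c * s ^ α))))
    zero_le_one hgc ?_ ?_ ?_
  · rw [hI] at hle
    simp [hg, hu1, hu0] at hle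
    linarith
  · intro s hs
    have h1s : 0 < 1 - s := by linarith [hs.2]
    have h := ((hasDerivAt_id s).const_sub 1).rpow_const (p := (1 - α) - 1) (Or.inl h1s.ne')
    exact (h.mul (hud s hs.1)).hasDerivWithinAt
  · refine IntegrableOn.mul_continuousOn ?_ ?_ isCompact_Icc
    · rw [integrableOn_Icc_iff_integrableOn_Ioc]
      exact ml_beta_int hα0 hb
    · have : Continuous fun s : ℝ => mlD α (-(c * s ^ α)) :=
        (mlD_continuous hα0).comp (by fun_prop)
      exact (this.const_mul _).continuousOn
  · intro s hs
    have h1s : 0 < 1 - s := by linarith [hs.2]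
    have := hupos s hs
    have h2 : 0 ≤ (-1 * ((1 - α) - 1) * (1 - s) ^ ((1 - α) - 1 - 1)) * u s := by
      have : -1 * ((1 - α) - 1) = α := by ring
      rw [this]
      positivity
    linarith

/-- For 0 < α < 1, λ > 0 and T > 0 one has E_{α,1}(-λ T^α) > 0 (in particular ≠ 0);
this follows from the complete monotonicity of E_{α,1}(-·) on [0,∞). -/
theorem mittagLeffler_pos (α : ℝ) (hα0 : 0 < α) (hα1 : α < 1) :
    ∀ lam T : ℝ, 0 < lam → 0 < T → 0 < mittagLeffler α (-(lam * T ^ α)) := by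
  intro lam T hlam hT
  have hx : 0 < lam * T ^ α := by positivity
  generalize lam * T ^ α = x at hx
  by_contra! hneg
  have hEc : Continuous fun y : ℝ => mittagLeffler α (-y) :=
    (continuous_iff_continuousAt.2 fun x => (ml_hasDerivAt hα0 x).continuousAt).comp
      continuous_neg
  have hE0 : mittagLeffler α (-0) = 1 := by
    simp only [neg_zero, mittagLeffler]
    rw [tsum_eq_single 0]
    · simp
    · intro k hk; simp [hk]
  have hcomp : IsCompact (Icc 0 x ∩ {y : ℝ | mittagLeffler α (-y) ≤ 0}) :=
    isCompact_Icc.inter_right (isClosed_le hEc continuous_const)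
  obtain ⟨c, ⟨hcI, hc0⟩, hleast⟩ := hcomp.exists_isLeast ⟨x, ⟨hx.le, le_rfl⟩, hneg⟩
  have hc0' : mittagLeffler α (-c) ≤ 0 := hc0
  have hcpos : 0 < c := by
    rcases hcI.1.eq_or_lt with h | h
    · rw [← h, hE0] at hc0'
      linarith
    · exact h
  have hpos : ∀ y, 0 ≤ y → y < c → 0 < mittagLeffler α (-y) := by
    intro y hy0 hyc
    by_contra! hy
    exact absurd (hleast ⟨⟨hy0, hyc.le.trans hcI.2⟩, hy⟩) (not_le.2 hyc)
  refine ml_first_zero hα0 hα1 hcpos (le_antisymm hc0' ?_) hpos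
  obtain ⟨z, hz, hz0⟩ := intermediate_value_Icc' hcI.1 hEc.continuousOn
    (show (0:ℝ) ∈ Icc (mittagLeffler α (-c)) (mittagLeffler α (-0)) from
      ⟨hc0', by rw [hE0]; exact zero_le_one⟩)
  have hz0' : mittagLeffler α (-z) = 0 := hz0
  rcases hz.2.eq_or_lt with h | h
  · rw [← h, hz0']
  · exact absurd (hpos z hz.1 h) (by rw [hz0']; exact lt_irrefl _)
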